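/- arXiv:2003.08581 — 2 statements merged into one kernel-verified Lean document; each statement's English description precedes it below -/
import Mathlib

section
/- Suppose there is a non-negative random variable Λ₂ on Ω with 𝔼[Λ₂] < ∞ such that for ℙ-a.e. ω, κ(x,y;ω) ≤ Λ₂(τ_x ω) + Λ₂(τ_y ω) for all x,y ∈ ℝ^d. Then there is a set Ω₁ ⊆ Ω of full ℙ-measure such that for every ω ∈ Ω₁ and every g ∈ C_c¹(ℝ^d): lim_{η→0} limsup_{ε→0} ∬_{{|x−y|≤η}} (g(x)−g(y))²·κ(x/ε,y/ε;ω)·|x−y|^{−(d+α)} dx dy = 0 and lim_{η→0} limsup_{ε→0} ∬_{{|x−y|≥1/η}} (g(x)−g(y))²·κ(x/ε,y/ε;ω)·|x−y|^{−(d+α)} dx dy = 0. -/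
open MeasureTheory Filter Metric Set
open scoped ENNReal Topology

noncomputable section

/-- Euclidean space `ℝ^d`. -/
abbrev Rd (d : ℕ) : Type := EuclideanSpace ℝ (Fin d)

lemma vol_cball {d : ℕ} (x : Rd d) {r : ℝ} (hr : 0 ≤ r) :
    volume (closedBall x r) = ENNReal.ofReal (r ^ d) * volume (closedBall (0 : Rd d) 1) := by
  have := Measure.addHaar_closedBall' (volume : Measure (Rd d)) x hr
  simpa using this

lemma vitali_max {d : ℕ} (f : Rd d → ℝ≥0∞) (lam : ℝ≥0∞) (N : ℕ) :
    lam * volume {x : Rd d | x ∈ closedBall (0 : Rd d) (2 ^ N) ∧ ∃ k ≤ N,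
        lam * ENNReal.ofReal (((2 : ℝ) ^ k) ^ d) < ∫⁻ z in closedBall x (2 ^ k), f z}
      ≤ ENNReal.ofReal (5 ^ d) * volume (closedBall (0 : Rd d) 1) *
        ∫⁻ z in closedBall (0 : Rd d) (2 ^ (N + 1)), f z := by
  classical
  let t : Set (Rd d × ℕ) := {p | p.1 ∈ closedBall (0 : Rd d) (2 ^ N) ∧ p.2 ≤ N ∧
    lam * ENNReal.ofReal (((2 : ℝ) ^ p.2) ^ d) < ∫⁻ z in closedBall p.1 (2 ^ p.2), f z}
  obtain ⟨u, hut, hud, huc⟩ := Vitali.exists_disjoint_subfamily_covering_enlargement_closedBall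
    t (fun p => p.1) (fun p => (2 : ℝ) ^ p.2) (2 ^ N)
    (fun p hp => pow_le_pow_right₀ (by norm_num) hp.2.1) 5 (by norm_num)
  have hcount : u.Countable := hud.countable_of_nonempty_interior fun p _ =>
    ⟨p.1, mem_interior_iff_mem_nhds.2 (closedBall_mem_nhds _ (by positivity))⟩
  have hcov : {x : Rd d | x ∈ closedBall (0 : Rd d) (2 ^ N) ∧ ∃ k ≤ N,
        lam * ENNReal.ofReal (((2 : ℝ) ^ k) ^ d) < ∫⁻ z in closedBall x (2 ^ k), f z}
      ⊆ ⋃ p ∈ u, closedBall p.1 (5 * (2 : ℝ) ^ p.2) := by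
    rintro x ⟨hx, k, hk, hlt⟩
    obtain ⟨b, hb, hsub⟩ := huc (x, k) ⟨hx, hk, hlt⟩
    exact mem_biUnion hb (hsub (mem_closedBall_self (by positivity)))
  have hcu : Countable u := hcount.to_subtype
  calc _ ≤ lam * ∑' p : u, volume (closedBall p.1.1 (5 * (2 : ℝ) ^ p.1.2)) := by
        gcongr
        refine (measure_mono hcov).trans ?_
        exact measure_biUnion_le _ hcount _
    _ = ENNReal.ofReal (5 ^ d) * volume (closedBall (0 : Rd d) 1) *
        ∑' p : u, lam * ENNReal.ofReal (((2 : ℝ) ^ p.1.2) ^ d) := by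
        rw [← ENNReal.tsum_mul_left, ← ENNReal.tsum_mul_left]
        congr 1
        ext p
        rw [vol_cball _ (by positivity), mul_pow, ENNReal.ofReal_mul (by positivity)]
        ring
    _ ≤ ENNReal.ofReal (5 ^ d) * volume (closedBall (0 : Rd d) 1) *
        ∑' p : u, ∫⁻ z in closedBall p.1.1 (2 ^ p.1.2), f z := by
        gcongr with p
        exact (hut p.2).2.2.le
    _ = ENNReal.ofReal (5 ^ d) * volume (closedBall (0 : Rd d) 1) *
        ∫⁻ z in ⋃ p ∈ u, closedBall p.1 (2 ^ p.2), f z := by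
        rw [lintegral_biUnion hcount (fun p _ => measurableSet_closedBall) hud]
    _ ≤ _ := by
        gcongr
        refine iUnion₂_subset fun p hp => ?_
        have h1 := (hut hp).1
        have h2 := (hut hp).2.1
        intro z hz
        rw [mem_closedBall] at *
        have h3 : (2 : ℝ) ^ p.2 ≤ 2 ^ N := pow_le_pow_right₀ (by norm_num) h2
        have := dist_triangle z p.1 0
        rw [pow_succ]
        linarith

section ergodic
variable {Ω : Type*} [MeasurableSpace Ω] (ℙ : Measure Ω) [IsProbabilityMeasure ℙ]
    {d : ℕ} (τ : Rd d → Ω → Ω)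

lemma maximal_N
    (hτadd : ∀ x y, τ x ∘ τ y = τ (x + y))
    (hτmeas : Measurable fun p : Rd d × Ω => τ p.1 p.2)
    (hτstat : ∀ x, MeasurePreserving (τ x) ℙ ℙ)
    (F : Ω → ℝ≥0∞) (hF : Measurable F) (lam : ℝ≥0∞) (N : ℕ) :
    lam * ℙ {ω | ∃ k ≤ N, lam * ENNReal.ofReal (((2 : ℝ) ^ k) ^ d) <
        ∫⁻ z in closedBall (0 : Rd d) (2 ^ k), F (τ z ω)}
      ≤ ENNReal.ofReal (10 ^ d) * volume (closedBall (0 : Rd d) 1) * ∫⁻ ω, F ω ∂ℙ := by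
  set v := volume (closedBall (0 : Rd d) 1) with hv
  have hv0 : v ≠ 0 := (measure_closedBall_pos _ _ one_pos).ne'
  have hvt : v ≠ ∞ := measure_closedBall_lt_top.ne
  set E : Set Ω := {ω | ∃ k ≤ N, lam * ENNReal.ofReal (((2 : ℝ) ^ k) ^ d) <
        ∫⁻ z in closedBall (0 : Rd d) (2 ^ k), F (τ z ω)} with hE
  have hjm : Measurable fun p : Rd d × Ω => F (τ p.1 p.2) := hF.comp hτmeas
  have hEm : MeasurableSet E := by
    have : E = ⋃ k ∈ Set.Iic N, {ω | lam * ENNReal.ofReal (((2 : ℝ) ^ k) ^ d) <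
        ∫⁻ z in closedBall (0 : Rd d) (2 ^ k), F (τ z ω)} := by
      ext ω; simp [hE]
    rw [this]
    refine MeasurableSet.biUnion (Set.to_countable _) fun k _ => ?_
    refine measurableSet_lt measurable_const ?_
    exact Measurable.lintegral_prod_left' (μ := volume.restrict (closedBall (0 : Rd d) (2 ^ k))) hjm
  have hshift : ∀ ω x k, ∫⁻ z in closedBall (0 : Rd d) (2 ^ k), F (τ z (τ x ω))
      = ∫⁻ z in closedBall x (2 ^ k), F (τ z ω) := by
    intro ω x k
    rw [← lintegral_indicator measurableSet_closedBall,
      ← lintegral_indicator measurableSet_closedBall,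
      ← lintegral_add_right_eq_self ((closedBall x (2 ^ k)).indicator _) x]
    congr 1
    ext z
    have h1 : τ z (τ x ω) = τ (z + x) ω := congrFun (hτadd z x) ω
    simp only [indicator, mem_closedBall, dist_eq_norm, sub_zero, add_sub_cancel_right, h1]
  have hind : ∀ ω, lam * ∫⁻ x in closedBall (0 : Rd d) (2 ^ N), E.indicator 1 (τ x ω)
      ≤ ENNReal.ofReal (5 ^ d) * v *
        ∫⁻ z in closedBall (0 : Rd d) (2 ^ (N + 1)), F (τ z ω) := by
    intro ω
    refine le_trans (le_of_eq ?_) (vitali_max (fun z => F (τ z ω)) lam N)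
    congr 1
    have hmω : Measurable fun x => τ x ω := hτmeas.comp measurable_prodMk_right
    have h2 : (fun x => E.indicator (1 : Ω → ℝ≥0∞) (τ x ω))
        = ((fun x => τ x ω) ⁻¹' E).indicator 1 := by
      ext x; simp [indicator]
    rw [h2, lintegral_indicator_one (hmω hEm), Measure.restrict_apply (hmω hEm)]
    congr 1
    ext x
    simp only [mem_inter_iff, mem_preimage, hE, mem_ofPred_eq, hshift]
    tauto
  have key : ∀ (G : Ω → ℝ≥0∞), Measurable G → ∀ n : ℕ,
      ∫⁻ ω, (∫⁻ x in closedBall (0 : Rd d) (2 ^ n), G (τ x ω)) ∂ℙ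
      = ENNReal.ofReal (((2 : ℝ) ^ n) ^ d) * v * ∫⁻ ω, G ω ∂ℙ := by
    intro G hG n
    have hGm : Measurable fun p : Rd d × Ω => G (τ p.1 p.2) := hG.comp hτmeas
    rw [lintegral_lintegral_swap (f := fun ω x => G (τ x ω)) (hGm.comp measurable_swap).aemeasurable]
    simp_rw [(hτstat _).lintegral_comp hG]
    rw [setLIntegral_const, vol_cball _ (by positivity)]
    ring
  have hfin : lam * (ENNReal.ofReal (((2 : ℝ) ^ N) ^ d) * v * ℙ E)
      ≤ ENNReal.ofReal (5 ^ d) * v * (ENNReal.ofReal (((2 : ℝ) ^ (N + 1)) ^ d) * v * ∫⁻ ω, F ω ∂ℙ) := by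
    have h1 := lintegral_mono (μ := ℙ) hind
    have hm1 : Measurable fun p : Rd d × Ω => E.indicator (1 : Ω → ℝ≥0∞) (τ p.1 p.2) :=
      (measurable_one.indicator hEm).comp hτmeas
    rw [lintegral_const_mul _ (Measurable.lintegral_prod_left'
        (μ := volume.restrict (closedBall (0 : Rd d) (2 ^ N))) hm1),
      lintegral_const_mul _ (Measurable.lintegral_prod_left'
        (μ := volume.restrict (closedBall (0 : Rd d) (2 ^ (N + 1)))) hjm),
      key _ (measurable_one.indicator hEm), key _ hF, lintegral_indicator_one hEm] at h1
    exact h1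
  have hc0 : ENNReal.ofReal (((2 : ℝ) ^ N) ^ d) * v ≠ 0 :=
    mul_ne_zero (by simp) hv0
  have hct : ENNReal.ofReal (((2 : ℝ) ^ N) ^ d) * v ≠ ∞ :=
    ENNReal.mul_ne_top ENNReal.ofReal_ne_top hvt
  rw [← ENNReal.mul_le_mul_iff_right hc0 hct]
  refine le_trans (le_of_eq (by ring)) (hfin.trans (le_of_eq ?_))
  have : (10 : ℝ) ^ d = 5 ^ d * 2 ^ d := by rw [← mul_pow]; norm_num
  rw [this, pow_succ, mul_pow, ENNReal.ofReal_mul (by positivity), ENNReal.ofReal_mul (by positivity)]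
  ring

lemma maximal_ae
    (hτadd : ∀ x y, τ x ∘ τ y = τ (x + y))
    (hτmeas : Measurable fun p : Rd d × Ω => τ p.1 p.2)
    (hτstat : ∀ x, MeasurePreserving (τ x) ℙ ℙ)
    (F : Ω → ℝ≥0∞) (hF : Measurable F) (hFi : ∫⁻ ω, F ω ∂ℙ ≠ ∞) :
    ∀ᵐ ω ∂ℙ, ∃ M : ℝ≥0∞, M ≠ ∞ ∧ ∀ k : ℕ,
      ∫⁻ z in closedBall (0 : Rd d) (2 ^ k), F (τ z ω) ≤ M * ENNReal.ofReal (((2 : ℝ) ^ k) ^ d) := by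
  set C := ENNReal.ofReal (10 ^ d) * volume (closedBall (0 : Rd d) 1) * ∫⁻ ω, F ω ∂ℙ with hC
  have hCt : C ≠ ∞ := ENNReal.mul_ne_top (ENNReal.mul_ne_top ENNReal.ofReal_ne_top
    measure_closedBall_lt_top.ne) hFi
  let E : ℝ≥0∞ → ℕ → Set Ω := fun lam N => {ω | ∃ k ≤ N, lam * ENNReal.ofReal (((2 : ℝ) ^ k) ^ d) <
        ∫⁻ z in closedBall (0 : Rd d) (2 ^ k), F (τ z ω)}
  have hmono : ∀ lam, Monotone (E lam) := by
    rintro lam a b hab ω ⟨k, hk, h⟩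
    exact ⟨k, hk.trans hab, h⟩
  have hU : ∀ lam, lam * ℙ (⋃ N, E lam N) ≤ C := by
    intro lam
    rw [(hmono lam).measure_iUnion, ENNReal.mul_iSup]
    exact iSup_le fun N => maximal_N ℙ τ hτadd hτmeas hτstat F hF lam N
  rw [ae_iff]
  set B := {ω | ¬ ∃ M : ℝ≥0∞, M ≠ ∞ ∧ ∀ k : ℕ,
      ∫⁻ z in closedBall (0 : Rd d) (2 ^ k), F (τ z ω) ≤ M * ENNReal.ofReal (((2 : ℝ) ^ k) ^ d)}
  have hB : ∀ n : ℕ, (n : ℝ≥0∞) * ℙ B ≤ C := by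
    intro n
    refine le_trans ?_ (hU n)
    gcongr
    intro ω hω
    replace hω : ¬ ∃ M : ℝ≥0∞, M ≠ ∞ ∧ ∀ k : ℕ, ∫⁻ z in closedBall (0 : Rd d) (2 ^ k), F (τ z ω)
        ≤ M * ENNReal.ofReal (((2 : ℝ) ^ k) ^ d) := hω
    push Not at hω
    obtain ⟨k, hk⟩ := hω n (by simp)
    exact mem_iUnion.2 ⟨k, k, le_rfl, hk⟩
  by_contra h0
  obtain ⟨n, hn⟩ := ENNReal.exists_nat_mul_gt h0 hCt
  exact absurd (hB n) (not_le.2 hn)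

end ergodic
lemma conv_fst {d : ℕ} (F w : Rd d → ℝ≥0∞) (hF : Measurable F) (hw : Measurable w) :
    ∫⁻ p : Rd d × Rd d, F p.1 * w (p.1 - p.2) = (∫⁻ x, F x) * ∫⁻ h, w h := by
  rw [Measure.volume_eq_prod, lintegral_prod _ (by fun_prop)]
  have : ∀ x, ∫⁻ y, F x * w (x - y) = F x * ∫⁻ h, w h := by
    intro x
    rw [lintegral_const_mul _ (by fun_prop), lintegral_sub_left_eq_self w x]
  simp_rw [this]
  rw [lintegral_mul_const _ hF]

lemma conv_snd {d : ℕ} (F w : Rd d → ℝ≥0∞) (hF : Measurable F) (hw : Measurable w) :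
    ∫⁻ p : Rd d × Rd d, F p.2 * w (p.1 - p.2) = (∫⁻ x, F x) * ∫⁻ h, w h := by
  rw [Measure.volume_eq_prod, lintegral_prod_symm _ (by fun_prop)]
  have : ∀ y, ∫⁻ x, F y * w (x - y) = F y * ∫⁻ h, w h := by
    intro y
    rw [lintegral_const_mul _ (by fun_prop), lintegral_sub_right_eq_self w y]
  simp_rw [this]
  rw [lintegral_mul_const _ hF]

/-- weight for small jumps -/
def wS (d : ℕ) (α η : ℝ) : Rd d → ℝ≥0∞ :=
  (closedBall (0 : Rd d) η).indicator fun h => ENNReal.ofReal (‖h‖ ^ 2 / ‖h‖ ^ ((d : ℝ) + α))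

/-- weight for large jumps -/
def wL (d : ℕ) (α ρ : ℝ) : Rd d → ℝ≥0∞ :=
  {h : Rd d | ρ ≤ ‖h‖}.indicator fun h => ENNReal.ofReal ((‖h‖ ^ ((d : ℝ) + α))⁻¹)

lemma wS_meas (d : ℕ) (α η : ℝ) : Measurable (wS d α η) := by
  unfold wS
  exact Measurable.indicator (by fun_prop) measurableSet_closedBall

lemma wL_meas (d : ℕ) (α ρ : ℝ) : Measurable (wL d α ρ) := by
  unfold wL
  exact Measurable.indicator (by fun_prop) (measurableSet_le measurable_const measurable_norm)

lemma wS_fin (d : ℕ) (hd : 0 < d) (α : ℝ) (hα2 : α < 2) : 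
    ∫⁻ h, ENNReal.ofReal (‖h‖ ^ 2 / ‖h‖ ^ ((d : ℝ) + α)) ∂(volume.restrict (ball (0 : Rd d) 2)) ≠ ∞ := by
  have : Nonempty (Fin d) := ⟨⟨0, hd⟩⟩
  have h1 : IntegrableOn (fun x : Rd d => (fun y : ℝ => y ^ 2 / y ^ ((d : ℝ) + α)) ‖x‖) (ball 0 2) := by
    rw [integrableOn_fun_norm_addHaar volume (f := fun y : ℝ => y ^ 2 / y ^ ((d : ℝ) + α))]
    have h2 : IntegrableOn (fun y : ℝ => y ^ (1 - α)) (Ioo 0 2) :=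
      (intervalIntegral.integrableOn_Ioo_rpow_iff (by norm_num)).2 (by linarith)
    refine h2.congr_fun ?_ measurableSet_Ioo
    intro y hy
    have hy0 : 0 < y := hy.1
    simp only [finrank_euclideanSpace_fin, smul_eq_mul]
    rw [← Real.rpow_natCast, ← Real.rpow_natCast, ← Real.rpow_sub hy0, ← Real.rpow_add hy0]
    congr 1
    rw [Nat.cast_sub hd]
    push_cast
    ring
  have := h1.hasFiniteIntegral
  rw [hasFiniteIntegral_iff_ofReal] at this
  · exact this.ne
  · exact Eventually.of_forall fun x => by positivity

lemma wS_tendsto (d : ℕ) (hd : 0 < d) (α : ℝ) (hα2 : α < 2) :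
    Tendsto (fun η : ℝ => ∫⁻ h, wS d α η h) (𝓝[>] 0) (𝓝 0) := by
  have : Nonempty (Fin d) := ⟨⟨0, hd⟩⟩
  have hvol : Tendsto (fun η : ℝ => (volume.restrict (ball (0 : Rd d) 2)) (closedBall (0 : Rd d) η))
      (𝓝[>] 0) (𝓝 0) := by
    have h1 : Tendsto (fun η : ℝ => ENNReal.ofReal (η ^ d) * volume (closedBall (0 : Rd d) 1))
        (𝓝[>] 0) (𝓝 0) := by
      have h2 : Tendsto (fun η : ℝ => ENNReal.ofReal (η ^ d)) (𝓝[>] 0) (𝓝 0) := by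
        have : Continuous fun η : ℝ => ENNReal.ofReal (η ^ d) :=
          ENNReal.continuous_ofReal.comp (continuous_pow d)
        have h3 := (this.tendsto 0).mono_left (nhdsWithin_le_nhds (s := Ioi 0))
        simpa [hd.ne'] using h3
      have := ENNReal.Tendsto.mul_const h2
        (Or.inr (measure_closedBall_lt_top (μ := volume) (x := (0 : Rd d)) (r := 1)).ne)
      simpa using this
    refine tendsto_of_tendsto_of_tendsto_of_le_of_le' tendsto_const_nhds h1
      (Eventually.of_forall fun _ => zero_le) ?_
    filter_upwards [self_mem_nhdsWithin] with η hη
    rw [← vol_cball (0 : Rd d) (le_of_lt hη)]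
    exact Measure.restrict_apply_le _ _
  have := tendsto_setLIntegral_zero (wS_fin d hd α hα2) hvol
  refine this.congr' ?_
  filter_upwards [Ioo_mem_nhdsGT (show (0 : ℝ) < 1 by norm_num)] with η hη
  rw [Measure.restrict_restrict measurableSet_closedBall, wS,
    lintegral_indicator measurableSet_closedBall, inter_eq_left.2]
  exact closedBall_subset_ball (by linarith [hη.2])

/-- geometric constant -/
def Cg (d : ℕ) (α : ℝ) : ℝ≥0∞ :=
  ENNReal.ofReal (2 ^ d) * ∑' k : ℕ, (ENNReal.ofReal ((2 : ℝ) ^ (-α))) ^ k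

lemma Cg_fin (d : ℕ) {α : ℝ} (hα : 0 < α) : Cg d α ≠ ∞ := by
  refine ENNReal.mul_ne_top ENNReal.ofReal_ne_top ?_
  rw [ENNReal.tsum_geometric]
  refine ENNReal.inv_ne_top.2 ?_
  have : ENNReal.ofReal ((2 : ℝ) ^ (-α)) < 1 := by
    rw [ENNReal.ofReal_lt_one]
    exact Real.rpow_lt_one_of_one_lt_of_neg (by norm_num) (by linarith)
  exact (tsub_pos_of_lt this).ne'

lemma tail_bound {d : ℕ} {α : ℝ} (hα : 0 < α) (V : Rd d → ℝ≥0∞) (hV : Measurable V) (M : ℝ≥0∞)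
    (H : ∀ r : ℝ, 1 ≤ r → ∫⁻ x in closedBall (0 : Rd d) r, V x ≤ M * ENNReal.ofReal (r ^ d))
    (ρ : ℝ) (hρ : 1 ≤ ρ) :
    ∫⁻ y, V y * wL d α ρ y ≤ M * Cg d α * ENNReal.ofReal (ρ ^ (-α)) := by
  have hρ0 : 0 < ρ := by linarith
  have hpt : ∀ y, V y * wL d α ρ y ≤ ∑' k : ℕ,
      (closedBall (0 : Rd d) (2 ^ (k + 1) * ρ)).indicator V y *
        ENNReal.ofReal (((2 ^ k * ρ) ^ ((d : ℝ) + α))⁻¹) := by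
    intro y
    by_cases hy : ρ ≤ ‖y‖
    · obtain ⟨k, hk1, hk2⟩ := exists_nat_pow_near (x := ‖y‖ / ρ) (y := 2)
        ((one_le_div hρ0).2 hy) (by norm_num)
      rw [le_div_iff₀ hρ0] at hk1
      rw [div_lt_iff₀ hρ0] at hk2
      refine le_trans ?_ (ENNReal.le_tsum k)
      have hmem : y ∈ closedBall (0 : Rd d) (2 ^ (k + 1) * ρ) := by
        rw [mem_closedBall_zero_iff]; exact hk2.le
      have hmem2 : y ∈ {h : Rd d | ρ ≤ ‖h‖} := hy
      rw [wL, indicator_of_mem hmem, indicator_of_mem hmem2]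
      gcongr
    · have hmem2 : y ∉ {h : Rd d | ρ ≤ ‖h‖} := hy
      rw [wL, indicator_of_notMem hmem2]
      simp
  calc ∫⁻ y, V y * wL d α ρ y 
      ≤ ∫⁻ y, ∑' k : ℕ, (closedBall (0 : Rd d) (2 ^ (k + 1) * ρ)).indicator V y *
        ENNReal.ofReal (((2 ^ k * ρ) ^ ((d : ℝ) + α))⁻¹) := lintegral_mono hpt
    _ ≤ ∑' k : ℕ, ENNReal.ofReal (((2 ^ k * ρ) ^ ((d : ℝ) + α))⁻¹) *
          (M * ENNReal.ofReal ((2 ^ (k + 1) * ρ) ^ d)) := by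
        rw [lintegral_tsum fun k =>
          ((hV.indicator measurableSet_closedBall).mul_const _).aemeasurable]
        refine ENNReal.tsum_le_tsum fun k => ?_
        rw [lintegral_mul_const _ (hV.indicator measurableSet_closedBall),
          lintegral_indicator measurableSet_closedBall, mul_comm]
        gcongr
        exact H _ (one_le_mul_of_one_le_of_one_le (one_le_pow₀ (by norm_num)) hρ)
    _ = M * Cg d α * ENNReal.ofReal (ρ ^ (-α)) := by
        rw [Cg, ← ENNReal.tsum_mul_left, ← ENNReal.tsum_mul_left, ← ENNReal.tsum_mul_right]
        congr 1
        ext k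
        have : ((2 ^ k * ρ) ^ ((d : ℝ) + α))⁻¹ * (2 ^ (k + 1) * ρ) ^ d
            = 2 ^ d * ((2 : ℝ) ^ (-α)) ^ k * ρ ^ (-α) := by
          have h0 : 0 < 2 ^ k * ρ := by positivity
          rw [Real.rpow_add h0, Real.rpow_natCast, mul_inv, ← Real.rpow_neg h0.le,
            Real.mul_rpow (by positivity) hρ0.le, ← Real.rpow_natCast (2 : ℝ) k,
            ← Real.rpow_mul (by norm_num), ← Real.rpow_natCast (2 ^ (-α)) k,
            ← Real.rpow_mul (by norm_num), mul_comm (k : ℝ) (-α), pow_succ, mul_right_comm,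
            mul_right_comm _ 2 ρ, mul_pow _ 2 d, Real.rpow_natCast 2 k]
          field_simp
        rw [← ENNReal.ofReal_pow (by positivity), mul_left_comm, ← ENNReal.ofReal_mul (by positivity),
          this, ENNReal.ofReal_mul (by positivity), ENNReal.ofReal_mul (by positivity)]
        ring
lemma small_bound {d : ℕ} {α : ℝ} (V : Rd d → ℝ≥0∞) (hV : Measurable V) (M : ℝ≥0∞)
    (H : ∀ r : ℝ, 1 ≤ r → ∫⁻ x in closedBall (0 : Rd d) r, V x ≤ M * ENNReal.ofReal (r ^ d))
    (K : Rd d → Rd d → ℝ) (hK : ∀ x y, ENNReal.ofReal (K x y) ≤ V x + V y) (hK0 : ∀ x y, 0 ≤ K x y)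
    (g : Rd d → ℝ) (L R : ℝ) (hL : ∀ x y, |g x - g y| ≤ L * ‖x - y‖)
    (hR : 1 ≤ R) (hgR : ∀ x, R < ‖x‖ → g x = 0) (η : ℝ) (hη : η ≤ 1) :
    ∫⁻ p in {p : Rd d × Rd d | ‖p.1 - p.2‖ ≤ η},
      ENNReal.ofReal ((g p.1 - g p.2) ^ 2 * K p.1 p.2 / ‖p.1 - p.2‖ ^ ((d : ℝ) + α))
      ≤ ENNReal.ofReal (L ^ 2) * (2 * (M * ENNReal.ofReal ((R + 1) ^ d))) * ∫⁻ h, wS d α η h := by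
  set B := closedBall (0 : Rd d) (R + 1) with hB
  have hBm : Measurable (B.indicator V) := hV.indicator measurableSet_closedBall
  have hwm := wS_meas d α η
  have hSm : MeasurableSet {p : Rd d × Rd d | ‖p.1 - p.2‖ ≤ η} :=
    measurableSet_le (by fun_prop) measurable_const
  have hpt : ∀ p : Rd d × Rd d, p ∈ {p : Rd d × Rd d | ‖p.1 - p.2‖ ≤ η} →
      ENNReal.ofReal ((g p.1 - g p.2) ^ 2 * K p.1 p.2 / ‖p.1 - p.2‖ ^ ((d : ℝ) + α))
      ≤ ENNReal.ofReal (L ^ 2) * (B.indicator V p.1 * wS d α η (p.1 - p.2)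
        + B.indicator V p.2 * wS d α η (p.1 - p.2)) := by
    rintro ⟨x, y⟩ hp
    replace hp : ‖x - y‖ ≤ η := hp
    simp only
    by_cases hxy : x ∈ B ∧ y ∈ B
    · have hw : x - y ∈ closedBall (0 : Rd d) η := by rwa [mem_closedBall_zero_iff]
      rw [wS, indicator_of_mem hxy.1, indicator_of_mem hxy.2, indicator_of_mem hw, ← add_mul]
      have h1 : (g x - g y) ^ 2 ≤ L ^ 2 * ‖x - y‖ ^ 2 := by
        rw [← mul_pow, ← sq_abs]
        exact pow_le_pow_left₀ (abs_nonneg _) (hL x y) 2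
      calc _ ≤ ENNReal.ofReal (L ^ 2 * (K x y * (‖x - y‖ ^ 2 / ‖x - y‖ ^ ((d : ℝ) + α)))) := by
            apply ENNReal.ofReal_le_ofReal
            calc _ ≤ L ^ 2 * ‖x - y‖ ^ 2 * K x y / ‖x - y‖ ^ ((d : ℝ) + α) := by
                  have := hK0 x y
                  gcongr
              _ = _ := by ring
        _ = ENNReal.ofReal (L ^ 2) * (ENNReal.ofReal (K x y) *
              ENNReal.ofReal (‖x - y‖ ^ 2 / ‖x - y‖ ^ ((d : ℝ) + α))) := by
            rw [ENNReal.ofReal_mul (by positivity), ENNReal.ofReal_mul (hK0 x y)]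
        _ ≤ _ := by
            gcongr
            exact hK x y
    · have h0 : g x = 0 ∧ g y = 0 := by
        have hx1 : ‖x‖ ≤ ‖x - y‖ + ‖y‖ := by simpa using norm_add_le (x - y) y
        have hy1 : ‖y‖ ≤ ‖x - y‖ + ‖x‖ := by
          rw [norm_sub_rev]; simpa using norm_add_le (y - x) x
        simp only [hB, mem_closedBall_zero_iff, not_and_or, not_le] at hxy
        rcases hxy with h | h <;> exact ⟨hgR _ (by linarith), hgR _ (by linarith)⟩
      simp [h0.1, h0.2]
  have hBi : ∫⁻ x, B.indicator V x ≤ M * ENNReal.ofReal ((R + 1) ^ d) := by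
    rw [lintegral_indicator measurableSet_closedBall]
    exact H _ (by linarith)
  calc _ ≤ ∫⁻ p in {p : Rd d × Rd d | ‖p.1 - p.2‖ ≤ η}, ENNReal.ofReal (L ^ 2) *
          (B.indicator V p.1 * wS d α η (p.1 - p.2)
          + B.indicator V p.2 * wS d α η (p.1 - p.2)) := setLIntegral_mono' hSm hpt
    _ ≤ ∫⁻ p : Rd d × Rd d, ENNReal.ofReal (L ^ 2) *
          (B.indicator V p.1 * wS d α η (p.1 - p.2)
          + B.indicator V p.2 * wS d α η (p.1 - p.2)) := setLIntegral_le_lintegral _ _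
    _ = ENNReal.ofReal (L ^ 2) * ((∫⁻ x, B.indicator V x) * (∫⁻ h, wS d α η h)
          + (∫⁻ x, B.indicator V x) * (∫⁻ h, wS d α η h)) := by
        rw [lintegral_const_mul _ (by fun_prop), lintegral_add_left (by fun_prop),
          conv_fst _ _ hBm hwm, conv_snd _ _ hBm hwm]
    _ = ENNReal.ofReal (L ^ 2) * (2 * (∫⁻ x, B.indicator V x)) * (∫⁻ h, wS d α η h) := by ring
    _ ≤ _ := by gcongr

lemma wL_cross {d : ℕ} {α : ℝ} (hα : 0 < α) {R ρ : ℝ} (hρR : R ≤ ρ) (hρ : 1 ≤ ρ) (x y : Rd d)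
    (hx : ‖x‖ ≤ R) :
    wL d α (2 * ρ) (x - y) ≤ ENNReal.ofReal (2 ^ ((d : ℝ) + α)) * wL d α ρ y := by
  by_cases h : 2 * ρ ≤ ‖x - y‖
  · have h1 : ‖x - y‖ ≤ ‖x‖ + ‖y‖ := norm_sub_le x y
    have hy1 : ‖y‖ ≤ ‖x - y‖ + ‖x‖ := by
      rw [norm_sub_rev]; simpa using norm_add_le (y - x) x
    have hm1 : x - y ∈ {h : Rd d | 2 * ρ ≤ ‖h‖} := h
    have hy : ρ ≤ ‖y‖ := by linarith
    have hm2 : y ∈ {h : Rd d | ρ ≤ ‖h‖} := hy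
    rw [wL, wL, indicator_of_mem hm1, indicator_of_mem hm2, ← ENNReal.ofReal_mul (by positivity)]
    apply ENNReal.ofReal_le_ofReal
    have hy0 : 0 < ‖y‖ := by linarith
    have h2 : ((‖y‖ / 2) ^ ((d : ℝ) + α))⁻¹ = 2 ^ ((d : ℝ) + α) * (‖y‖ ^ ((d : ℝ) + α))⁻¹ := by
      rw [Real.div_rpow hy0.le (by norm_num), inv_div, div_eq_mul_inv]
    rw [← h2]
    gcongr
    linarith
  · have hm1 : x - y ∉ {h : Rd d | 2 * ρ ≤ ‖h‖} := h
    rw [wL, indicator_of_notMem hm1]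
    exact zero_le

lemma wL_anti {d : ℕ} {α : ℝ} {ρ : ℝ} (hρ : 0 ≤ ρ) (h : Rd d) :
    wL d α (2 * ρ) h ≤ wL d α ρ h := by
  unfold wL
  refine indicator_le_indicator_of_subset ?_ (fun _ => zero_le) h
  intro z hz
  have hz' : 2 * ρ ≤ ‖z‖ := hz
  show ρ ≤ ‖z‖
  linarith

lemma wL_symm {d : ℕ} {α : ℝ} {ρ : ℝ} (x y : Rd d) :
    wL d α ρ (x - y) = wL d α ρ (y - x) := by
  simp only [wL, indicator, mem_ofPred_eq, norm_sub_rev x y]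

lemma large_bound {d : ℕ} {α : ℝ} (hα : 0 < α) (V : Rd d → ℝ≥0∞) (hV : Measurable V) (M : ℝ≥0∞)
    (H : ∀ r : ℝ, 1 ≤ r → ∫⁻ x in closedBall (0 : Rd d) r, V x ≤ M * ENNReal.ofReal (r ^ d))
    (K : Rd d → Rd d → ℝ) (hK : ∀ x y, ENNReal.ofReal (K x y) ≤ V x + V y) (hK0 : ∀ x y, 0 ≤ K x y)
    (g : Rd d → ℝ) (G R : ℝ) (hG : ∀ x, |g x| ≤ G)
    (hR : 1 ≤ R) (hgR : ∀ x, R < ‖x‖ → g x = 0) (ρ : ℝ) (hρR : R ≤ ρ) :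
    ∫⁻ p in {p : Rd d × Rd d | 2 * ρ ≤ ‖p.1 - p.2‖},
      ENNReal.ofReal ((g p.1 - g p.2) ^ 2 * K p.1 p.2 / ‖p.1 - p.2‖ ^ ((d : ℝ) + α))
      ≤ ENNReal.ofReal (4 * G ^ 2) * (2 * ((M * ENNReal.ofReal (R ^ d)) *
          (volume (closedBall (0 : Rd d) 1) * Cg d α))
        + 2 * (volume (closedBall (0 : Rd d) R) * ENNReal.ofReal (2 ^ ((d : ℝ) + α)) *
          (M * Cg d α))) * ENNReal.ofReal (ρ ^ (-α)) := by
  have hρ : 1 ≤ ρ := hR.trans hρR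
  have hG0 : 0 ≤ G := (abs_nonneg _).trans (hG 0)
  set c := ENNReal.ofReal ((2 : ℝ) ^ ((d : ℝ) + α)) with hc
  set B := closedBall (0 : Rd d) R with hB
  set b : Rd d → ℝ≥0∞ := B.indicator 1 with hb
  have hbm : Measurable b := measurable_one.indicator measurableSet_closedBall
  have hwm := wL_meas d α ρ
  have hSm : MeasurableSet {p : Rd d × Rd d | 2 * ρ ≤ ‖p.1 - p.2‖} :=
    measurableSet_le measurable_const (by fun_prop)
  have hcross : ∀ x y, b x * wL d α (2 * ρ) (x - y) ≤ b x * (c * wL d α ρ y) := by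
    intro x y
    by_cases hx : x ∈ B
    · gcongr
      exact wL_cross hα hρR hρ x y (by simpa [hB] using hx)
    · simp [hb, hx]
  have hpt : ∀ p : Rd d × Rd d, p ∈ {p : Rd d × Rd d | 2 * ρ ≤ ‖p.1 - p.2‖} →
      ENNReal.ofReal ((g p.1 - g p.2) ^ 2 * K p.1 p.2 / ‖p.1 - p.2‖ ^ ((d : ℝ) + α))
      ≤ ENNReal.ofReal (4 * G ^ 2) * (((b p.1 * V p.1) * wL d α ρ (p.1 - p.2)
        + (b p.2 * V p.2) * wL d α ρ (p.1 - p.2))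
        + (b p.1 * (c * (V p.2 * wL d α ρ p.2)) + (c * (V p.1 * wL d α ρ p.1)) * b p.2)) := by
    rintro ⟨x, y⟩ hp
    simp only
    have hw : wL d α (2 * ρ) (x - y) = ENNReal.ofReal ((‖x - y‖ ^ ((d : ℝ) + α))⁻¹) := by
      have : x - y ∈ {h : Rd d | 2 * ρ ≤ ‖h‖} := hp
      rw [wL, indicator_of_mem this]
    have h1 : ENNReal.ofReal ((g x - g y) ^ 2) ≤ ENNReal.ofReal (4 * G ^ 2) * (b x + b y) := by
      by_cases hxy : x ∈ B ∨ y ∈ B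
      · have h2 : 1 ≤ b x + b y := by
          rcases hxy with h | h
          · simp [hb, h]
          · simp [hb, h]
        have h3 : (g x - g y) ^ 2 ≤ 4 * G ^ 2 := by
          have := abs_le.1 (hG x)
          have := abs_le.1 (hG y)
          nlinarith
        calc _ ≤ ENNReal.ofReal (4 * G ^ 2) * 1 := by
              rw [mul_one]; exact ENNReal.ofReal_le_ofReal h3
          _ ≤ _ := by gcongr
      · simp only [hB, mem_closedBall_zero_iff, not_or, not_le] at hxy
        simp [hgR x hxy.1, hgR y hxy.2]
    calc _ = ENNReal.ofReal ((g x - g y) ^ 2) * ENNReal.ofReal (K x y) * wL d α (2 * ρ) (x - y) := by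
          rw [hw, div_eq_mul_inv, ENNReal.ofReal_mul (mul_nonneg (by positivity) (hK0 x y)),
            ENNReal.ofReal_mul (by positivity)]
      _ ≤ ENNReal.ofReal (4 * G ^ 2) * (b x + b y) * (V x + V y) * wL d α (2 * ρ) (x - y) := by
          gcongr
          exact hK x y
      _ = ENNReal.ofReal (4 * G ^ 2) * (((b x * V x) * wL d α (2 * ρ) (x - y)
            + (b y * V y) * wL d α (2 * ρ) (x - y))
            + (V y * (b x * wL d α (2 * ρ) (x - y)) + V x * (b y * wL d α (2 * ρ) (y - x)))) := by
          rw [wL_symm y x]; ring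
      _ ≤ ENNReal.ofReal (4 * G ^ 2) * (((b x * V x) * wL d α ρ (x - y)
            + (b y * V y) * wL d α ρ (x - y))
            + (V y * (b x * (c * wL d α ρ y)) + V x * (b y * (c * wL d α ρ x)))) := by
          have := wL_anti (d := d) (α := α) (by linarith : 0 ≤ ρ) (x - y)
          have := hcross x y
          have := hcross y x
          gcongr
      _ = _ := by ring
  have hbV : ∫⁻ x, b x * V x ≤ M * ENNReal.ofReal (R ^ d) := by
    have : (fun x => b x * V x) = B.indicator V := by
      ext x; by_cases hx : x ∈ B <;> simp [hb, hx]
    rw [this, lintegral_indicator measurableSet_closedBall]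
    exact H _ hR
  have hbi : ∫⁻ x, b x = volume B := lintegral_indicator_one measurableSet_closedBall
  have hwi : ∫⁻ h, wL d α ρ h ≤ volume (closedBall (0 : Rd d) 1) * Cg d α * ENNReal.ofReal (ρ ^ (-α)) := by
    have := tail_bound hα (fun _ : Rd d => 1) measurable_const (volume (closedBall (0 : Rd d) 1))
      (fun r hr => by
        rw [setLIntegral_const, one_mul, vol_cball _ (by linarith), mul_comm]) ρ hρ
    simpa using this
  have hVw := tail_bound hα V hV M H ρ hρ
  calc _ ≤ ∫⁻ p in {p : Rd d × Rd d | 2 * ρ ≤ ‖p.1 - p.2‖}, 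
        ENNReal.ofReal (4 * G ^ 2) * (((b p.1 * V p.1) * wL d α ρ (p.1 - p.2)
        + (b p.2 * V p.2) * wL d α ρ (p.1 - p.2))
        + (b p.1 * (c * (V p.2 * wL d α ρ p.2)) + (c * (V p.1 * wL d α ρ p.1)) * b p.2)) :=
          setLIntegral_mono' hSm hpt
    _ ≤ ∫⁻ p : Rd d × Rd d, 
        ENNReal.ofReal (4 * G ^ 2) * (((b p.1 * V p.1) * wL d α ρ (p.1 - p.2)
        + (b p.2 * V p.2) * wL d α ρ (p.1 - p.2))
        + (b p.1 * (c * (V p.2 * wL d α ρ p.2)) + (c * (V p.1 * wL d α ρ p.1)) * b p.2)) :=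
          setLIntegral_le_lintegral _ _
    _ = ENNReal.ofReal (4 * G ^ 2) * (((∫⁻ x, b x * V x) * (∫⁻ h, wL d α ρ h)
        + (∫⁻ x, b x * V x) * (∫⁻ h, wL d α ρ h))
        + ((∫⁻ x, b x) * (c * ∫⁻ y, V y * wL d α ρ y)
          + (c * ∫⁻ y, V y * wL d α ρ y) * (∫⁻ x, b x))) := by
        rw [lintegral_const_mul _ (by fun_prop), lintegral_add_left (by fun_prop),
          lintegral_add_left (by fun_prop), lintegral_add_left (by fun_prop),
          conv_fst (fun x => b x * V x) _ (by fun_prop) hwm,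
          conv_snd (fun x => b x * V x) _ (by fun_prop) hwm, Measure.volume_eq_prod,
          lintegral_prod_mul (f := b) (g := fun y => c * (V y * wL d α ρ y))
            (by fun_prop) (by fun_prop),
          lintegral_prod_mul (g := b) (f := fun y => c * (V y * wL d α ρ y))
            (by fun_prop) (by fun_prop), lintegral_const_mul _ (by fun_prop)]
    _ ≤ ENNReal.ofReal (4 * G ^ 2) * (((M * ENNReal.ofReal (R ^ d)) *
          (volume (closedBall (0 : Rd d) 1) * Cg d α * ENNReal.ofReal (ρ ^ (-α)))
        + (M * ENNReal.ofReal (R ^ d)) *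
          (volume (closedBall (0 : Rd d) 1) * Cg d α * ENNReal.ofReal (ρ ^ (-α))))
        + (volume B * (c * (M * Cg d α * ENNReal.ofReal (ρ ^ (-α))))
          + (c * (M * Cg d α * ENNReal.ofReal (ρ ^ (-α)))) * volume B)) := by
        rw [hbi]
        gcongr
    _ = _ := by ring

lemma scale_bound {d : ℕ} (f : Rd d → ℝ≥0∞) (hf : Measurable f) (M : ℝ≥0∞)
    (H : ∀ k : ℕ, ∫⁻ z in closedBall (0 : Rd d) (2 ^ k), f z ≤ M * ENNReal.ofReal (((2 : ℝ) ^ k) ^ d))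
    (ε : ℝ) (hε0 : 0 < ε) (hε1 : ε ≤ 1) (r : ℝ) (hr : 1 ≤ r) :
    ∫⁻ x in closedBall (0 : Rd d) r, f (ε⁻¹ • x)
      ≤ (M * ENNReal.ofReal (2 ^ d)) * ENNReal.ofReal (r ^ d) := by
  have hr0 : 0 < r := by linarith
  have hre : 1 ≤ ε⁻¹ * r := one_le_mul_of_one_le_of_one_le ((one_le_inv₀ hε0).2 hε1) hr
  obtain ⟨k, hk1, hk2⟩ := exists_nat_pow_near hre (by norm_num : (1 : ℝ) < 2)
  have h1 : ∫⁻ x in closedBall (0 : Rd d) r, f (ε⁻¹ • x)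
      = ENNReal.ofReal (ε ^ d) * ∫⁻ z in closedBall (0 : Rd d) (ε⁻¹ * r), f z := by
    rw [← lintegral_indicator measurableSet_closedBall,
      ← lintegral_indicator measurableSet_closedBall]
    have h2 := lintegral_map (μ := (volume : Measure (Rd d)))
      (f := (closedBall (0 : Rd d) (ε⁻¹ * r)).indicator f) (g := fun x => ε⁻¹ • x)
      (hf.indicator measurableSet_closedBall) (by fun_prop)
    rw [Measure.map_addHaar_smul _ (inv_ne_zero hε0.ne'), lintegral_smul_measure] at h2
    have h3 : |((ε⁻¹) ^ Module.finrank ℝ (Rd d))⁻¹| = ε ^ d := by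
      rw [finrank_euclideanSpace_fin, inv_pow, inv_inv, abs_of_pos (by positivity)]
    rw [h3, smul_eq_mul] at h2
    rw [h2]
    congr 1
    ext x
    have h4 : ε⁻¹ • x ∈ closedBall (0 : Rd d) (ε⁻¹ * r) ↔ x ∈ closedBall (0 : Rd d) r := by
      rw [mem_closedBall_zero_iff, mem_closedBall_zero_iff, norm_smul, Real.norm_eq_abs,
        abs_of_pos (inv_pos.2 hε0), mul_le_mul_iff_right₀ (inv_pos.2 hε0)]
    by_cases hx : x ∈ closedBall (0 : Rd d) r
    · rw [indicator_of_mem hx, indicator_of_mem (h4.2 hx)]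
    · rw [indicator_of_notMem hx, indicator_of_notMem (fun h => hx (h4.1 h))]
  calc _ ≤ ENNReal.ofReal (ε ^ d) * ∫⁻ z in closedBall (0 : Rd d) (2 ^ (k + 1)), f z := by
        rw [h1]
        gcongr
    _ ≤ ENNReal.ofReal (ε ^ d) * (M * ENNReal.ofReal (((2 : ℝ) ^ (k + 1)) ^ d)) := by
        gcongr
        exact H _
    _ ≤ ENNReal.ofReal (ε ^ d) * (M * ENNReal.ofReal ((2 * (ε⁻¹ * r)) ^ d)) := by
        gcongr
        rw [pow_succ]; linarith
    _ = _ := by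
        have : (2 * (ε⁻¹ * r)) ^ d = 2 ^ d * (r ^ d * (ε ^ d)⁻¹) := by
          rw [mul_pow, mul_pow, inv_pow]; ring
        rw [mul_left_comm, ← ENNReal.ofReal_mul (by positivity), this, mul_assoc M,
          ← ENNReal.ofReal_mul (by positivity)]
        congr 2
        field_simp

lemma ofReal_integral_le {X : Type*} [MeasurableSpace X] (μ : Measure X) (f : X → ℝ)
    (hf : ∀ x, 0 ≤ f x) : ENNReal.ofReal (∫ x, f x ∂μ) ≤ ∫⁻ x, ENNReal.ofReal (f x) ∂μ := by
  by_cases h : Integrable f μ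
  · rw [ofReal_integral_eq_lintegral_ofReal h (Eventually.of_forall hf)]
  · rw [integral_undef h]; simp

lemma limsup_squeeze (Φ : ℝ → ℝ → ℝ) (hΦ : ∀ η ε, 0 ≤ Φ η ε) (C : ℝ → ℝ≥0∞)
    (hC : Tendsto C (𝓝[>] 0) (𝓝 0))
    (h : ∀ᶠ η in 𝓝[>] (0 : ℝ), ∀ ε, 0 < ε → ε ≤ 1 → ENNReal.ofReal (Φ η ε) ≤ C η) :
    Tendsto (fun η => limsup (Φ η) (𝓝[>] (0 : ℝ))) (𝓝[>] 0) (𝓝 0) := by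
  have hC' : Tendsto (fun η => (C η).toReal) (𝓝[>] 0) (𝓝 0) := by
    have := (ENNReal.tendsto_toReal ENNReal.zero_ne_top).comp hC
    simpa [Function.comp_def] using this
  have hfin : ∀ᶠ η in 𝓝[>] (0 : ℝ), C η < ∞ := hC.eventually_lt_const (by simp)
  have hb : ∀ᶠ η in 𝓝[>] (0 : ℝ), ∀ᶠ ε in 𝓝[>] (0 : ℝ), Φ η ε ≤ (C η).toReal := by
    filter_upwards [h, hfin] with η h1 h2
    filter_upwards [Ioc_mem_nhdsGT (show (0 : ℝ) < 1 by norm_num)] with ε hε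
    exact (ENNReal.ofReal_le_iff_le_toReal h2.ne).1 (h1 ε hε.1 hε.2)
  refine tendsto_of_tendsto_of_tendsto_of_le_of_le' tendsto_const_nhds hC' ?_ ?_
  · filter_upwards [hb] with η h1
    exact le_limsup_of_frequently_le (Eventually.of_forall (hΦ η)).frequently ⟨_, h1⟩
  · filter_upwards [hb] with η h1
    exact limsup_le_of_le (isCoboundedUnder_le_of_le _ (hΦ η)) h1

/-- If `κ(x,y;ω) ≤ Λ₂(τ_x ω) + Λ₂(τ_y ω)` with `𝔼[Λ₂] < ∞`, then almost surely, for
every `g ∈ C_c¹(ℝ^d)`, the contribution of very small and very large jumps to the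
scaled energy of `g` vanishes in the iterated limit `ε → 0`, `η → 0`. -/
theorem small_and_large_jumps_negligible
    {Ω : Type*} [MeasurableSpace Ω] (ℙ : Measure Ω) [IsProbabilityMeasure ℙ]
    (d : ℕ) (hd : 0 < d) (α : ℝ) (hα0 : 0 < α) (hα2 : α < 2)
    -- the stationary ergodic group of transformations
    (τ : Rd d → Ω → Ω)
    (hτ0 : τ 0 = id)
    (hτadd : ∀ x y, τ x ∘ τ y = τ (x + y))
    (hτmeas : Measurable fun p : Rd d × Ω => τ p.1 p.2)
    (hτstat : ∀ x, MeasurePreserving (τ x) ℙ ℙ)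
    (hτerg : ∀ A : Set Ω, MeasurableSet A → (∀ x, τ x ⁻¹' A = A) → ℙ A = 0 ∨ ℙ A = 1)
    -- the coefficient κ
    (κ : Rd d → Rd d → Ω → ℝ)
    (hκmeas : Measurable fun p : Rd d × Rd d × Ω => κ p.1 p.2.1 p.2.2)
    (hκnn : ∀ x y ω, 0 ≤ κ x y ω)
    (hκsym : ∀ x y ω, κ x y ω = κ y x ω)
    (hκshift : ∀ x y z ω, κ (x + z) (y + z) ω = κ x y (τ z ω))
    -- the dominating random variable Λ₂ with 𝔼[Λ₂] < ∞
    (Λ₂ : Ω → ℝ) (hΛmeas : Measurable Λ₂) (hΛnn : ∀ ω, 0 ≤ Λ₂ ω)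
    (hΛint : Integrable Λ₂ ℙ)
    (hκbound : ∀ᵐ ω ∂ℙ, ∀ x y : Rd d, κ x y ω ≤ Λ₂ (τ x ω) + Λ₂ (τ y ω)) :
    ∃ Ω₁ : Set Ω, MeasurableSet Ω₁ ∧ ℙ Ω₁ = 1 ∧
      ∀ ω ∈ Ω₁, ∀ g : Rd d → ℝ, ContDiff ℝ 1 g → HasCompactSupport g →
        Tendsto (fun η : ℝ =>
            limsup (fun ε : ℝ =>
              ∫ p in {p : Rd d × Rd d | ‖p.1 - p.2‖ ≤ η},
                (g p.1 - g p.2) ^ 2 * κ (ε⁻¹ • p.1) (ε⁻¹ • p.2) ω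
                  / ‖p.1 - p.2‖ ^ ((d : ℝ) + α)) (𝓝[>] (0 : ℝ)))
          (𝓝[>] (0 : ℝ)) (𝓝 0) ∧
        Tendsto (fun η : ℝ =>
            limsup (fun ε : ℝ =>
              ∫ p in {p : Rd d × Rd d | 1 / η ≤ ‖p.1 - p.2‖},
                (g p.1 - g p.2) ^ 2 * κ (ε⁻¹ • p.1) (ε⁻¹ • p.2) ω
                  / ‖p.1 - p.2‖ ^ ((d : ℝ) + α)) (𝓝[>] (0 : ℝ)))
          (𝓝[>] (0 : ℝ)) (𝓝 0) := by
  set F : Ω → ℝ≥0∞ := fun ω => ENNReal.ofReal (Λ₂ ω) with hF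
  have hFm : Measurable F := hΛmeas.ennreal_ofReal
  have hFi : ∫⁻ ω, F ω ∂ℙ ≠ ∞ := by
    rw [hF, ← ofReal_integral_eq_lintegral_ofReal hΛint (Eventually.of_forall hΛnn)]
    exact ENNReal.ofReal_ne_top
  have hae := (maximal_ae ℙ τ hτadd hτmeas hτstat F hFm hFi).and hκbound
  obtain ⟨T, hT, hTm, hT0⟩ := exists_measurable_superset_of_null (ae_iff.1 hae)
  refine ⟨Tᶜ, hTm.compl, (prob_compl_eq_one_iff hTm).2 hT0, ?_⟩
  intro ω hω g hg hgc
  have hgood : (∃ M : ℝ≥0∞, M ≠ ∞ ∧ ∀ k : ℕ,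
      ∫⁻ z in closedBall (0 : Rd d) (2 ^ k), F (τ z ω) ≤ M * ENNReal.ofReal (((2 : ℝ) ^ k) ^ d)) ∧
      ∀ x y : Rd d, κ x y ω ≤ Λ₂ (τ x ω) + Λ₂ (τ y ω) := by
    by_contra hcon
    exact hω (hT hcon)
  obtain ⟨⟨M, hMt, hM⟩, hκb⟩ := hgood
  have hτω : Measurable fun x => τ x ω := hτmeas.comp measurable_prodMk_right
  have hfm : Measurable fun x => F (τ x ω) := hFm.comp hτω
  -- the rescaled dominating function
  set M' := M * ENNReal.ofReal (2 ^ d) with hM'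
  have hM't : M' ≠ ∞ := ENNReal.mul_ne_top hMt ENNReal.ofReal_ne_top
  have hVm : ∀ ε : ℝ, Measurable fun x : Rd d => F (τ (ε⁻¹ • x) ω) := fun ε =>
    hfm.comp (by fun_prop : Measurable fun x : Rd d => ε⁻¹ • x)
  have hVH : ∀ ε : ℝ, 0 < ε → ε ≤ 1 → ∀ r : ℝ, 1 ≤ r →
      ∫⁻ x in closedBall (0 : Rd d) r, F (τ (ε⁻¹ • x) ω) ≤ M' * ENNReal.ofReal (r ^ d) :=
    fun ε h0 h1 r hr => scale_bound (fun x => F (τ x ω)) hfm M hM ε h0 h1 r hr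
  have hKb : ∀ (ε : ℝ) (x y : Rd d), ENNReal.ofReal (κ (ε⁻¹ • x) (ε⁻¹ • y) ω)
      ≤ F (τ (ε⁻¹ • x) ω) + F (τ (ε⁻¹ • y) ω) := by
    intro ε x y
    rw [hF, ← ENNReal.ofReal_add (hΛnn _) (hΛnn _)]
    exact ENNReal.ofReal_le_ofReal (hκb _ _)
  -- properties of g
  obtain ⟨L, hLip⟩ := hg.lipschitzWith_of_hasCompactSupport hgc (by norm_num)
  have hL : ∀ x y, |g x - g y| ≤ (L : ℝ) * ‖x - y‖ := by
    intro x y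
    have := hLip.dist_le_mul x y
    rwa [Real.dist_eq, dist_eq_norm] at this
  obtain ⟨G, hG⟩ := hg.continuous.bounded_above_of_compact_support hgc
  obtain ⟨R₀, hR₀⟩ := hgc.isCompact.isBounded.subset_closedBall (0 : Rd d)
  set R := max R₀ 1 with hRdef
  have hR1 : 1 ≤ R := le_max_right _ _
  have hgR : ∀ x, R < ‖x‖ → g x = 0 := by
    intro x hx
    by_contra hne
    have h1 := hR₀ (subset_tsupport g hne)
    rw [mem_closedBall_zero_iff] at h1
    linarith [le_max_left R₀ 1]
  have hpos : ∀ (ε : ℝ) (p : Rd d × Rd d), 0 ≤ (g p.1 - g p.2) ^ 2 *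
      κ (ε⁻¹ • p.1) (ε⁻¹ • p.2) ω / ‖p.1 - p.2‖ ^ ((d : ℝ) + α) := fun ε p =>
    div_nonneg (mul_nonneg (sq_nonneg _) (hκnn _ _ _)) (by positivity)
  constructor
  · refine limsup_squeeze _ (fun η ε => integral_nonneg (hpos ε))
      (fun η => ENNReal.ofReal ((L : ℝ) ^ 2) * (2 * (M' * ENNReal.ofReal ((R + 1) ^ d))) *
        ∫⁻ h, wS d α η h) ?_ ?_
    · have := ENNReal.Tendsto.const_mul (a := ENNReal.ofReal ((L : ℝ) ^ 2) *
        (2 * (M' * ENNReal.ofReal ((R + 1) ^ d)))) (wS_tendsto d hd α hα2)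
        (Or.inr (ENNReal.mul_ne_top ENNReal.ofReal_ne_top (ENNReal.mul_ne_top (by simp)
          (ENNReal.mul_ne_top hM't ENNReal.ofReal_ne_top))))
      simpa using this
    · filter_upwards [Ioo_mem_nhdsGT (show (0 : ℝ) < 1 by norm_num)] with η hη ε h0 h1
      refine (ofReal_integral_le _ _ (hpos ε)).trans ?_
      exact small_bound (fun x => F (τ (ε⁻¹ • x) ω)) (hVm ε) M' (hVH ε h0 h1)
        (fun x y => κ (ε⁻¹ • x) (ε⁻¹ • y) ω) (hKb ε) (fun x y => hκnn _ _ _) g L R hL hR1 hgR η hη.2.le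
  · set D := ENNReal.ofReal (4 * G ^ 2) * (2 * ((M' * ENNReal.ofReal (R ^ d)) *
          (volume (closedBall (0 : Rd d) 1) * Cg d α))
        + 2 * (volume (closedBall (0 : Rd d) R) * ENNReal.ofReal (2 ^ ((d : ℝ) + α)) *
          (M' * Cg d α))) with hD
    have hCg := Cg_fin d hα0
    have hDt : D ≠ ∞ := by
      have h1 : ∀ r, volume (closedBall (0 : Rd d) r) ≠ ∞ := fun r => measure_closedBall_lt_top.ne
      refine ENNReal.mul_ne_top ENNReal.ofReal_ne_top (ENNReal.add_ne_top.2 ⟨?_, ?_⟩)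
      · exact ENNReal.mul_ne_top (by simp) (ENNReal.mul_ne_top
          (ENNReal.mul_ne_top hM't ENNReal.ofReal_ne_top) (ENNReal.mul_ne_top (h1 1) hCg))
      · exact ENNReal.mul_ne_top (by simp) (ENNReal.mul_ne_top
          (ENNReal.mul_ne_top (h1 R) ENNReal.ofReal_ne_top) (ENNReal.mul_ne_top hM't hCg))
    have hρt : Tendsto (fun η : ℝ => η⁻¹ / 2) (𝓝[>] 0) atTop :=
      tendsto_inv_nhdsGT_zero.atTop_div_const (by norm_num)
    refine limsup_squeeze _ (fun η ε => integral_nonneg (hpos ε))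
      (fun η => D * ENNReal.ofReal ((η⁻¹ / 2) ^ (-α))) ?_ ?_
    · have h1 : Tendsto (fun η : ℝ => ENNReal.ofReal ((η⁻¹ / 2) ^ (-α))) (𝓝[>] 0) (𝓝 0) := by
        have := ENNReal.tendsto_ofReal ((tendsto_rpow_neg_atTop hα0).comp hρt)
        simpa using this
      have := ENNReal.Tendsto.const_mul (a := D) h1 (Or.inr hDt)
      simpa using this
    · filter_upwards [hρt.eventually_ge_atTop R] with η hη ε h0 h1
      refine (ofReal_integral_le _ _ (hpos ε)).trans ?_
      have h2 : 1 / η = 2 * (η⁻¹ / 2) := by ring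
      rw [h2]
      exact large_bound hα0 (fun x => F (τ (ε⁻¹ • x) ω)) (hVm ε) M' (hVH ε h0 h1)
        (fun x y => κ (ε⁻¹ • x) (ε⁻¹ • y) ω) (hKb ε) (fun x y => hκnn _ _ _) g G R hG hR1 hgR _ hη

end
end

section
/- Suppose there is a non-negative random variable Λ₂ on Ω with 𝔼[Λ₂] < ∞ such that for ℙ-a.e. ω: κ(x,y;ω) ≤ Λ₂(τ_x ω)·Λ₂(τ_y ω) for all x,y ∈ ℝ^d, and the function x ↦ Λ₂(τ_x ω) is locally bounded on ℝ^d. Then for ℙ-a.e. ω and every R ≥ 1: ∫_{B(0,R)} ∫_{ℝ^d} (1 ∧ |z|²)·κ(x,x+z;ω)·|z|^{−(d+α)} dz dx < ∞. -/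
open MeasureTheory Filter Metric Set
open scoped ENNReal Topology

noncomputable section

/-- **Remark 1.6.**  If `κ(x,y;ω) ≤ Λ₂(τ_x ω)Λ₂(τ_y ω)` with `𝔼[Λ₂] < ∞` and
`x ↦ Λ₂(τ_x ω)` locally bounded, then almost surely
`∫_{B(0,R)} ∫ (1 ∧ |z|²) κ(x,x+z;ω) |z|^{-(d+α)} dz dx < ∞` for every `R ≥ 1`. -/
theorem local_integrability_of_jump_kernel
    {Ω : Type*} [MeasurableSpace Ω] (ℙ : Measure Ω) [IsProbabilityMeasure ℙ]
    (d : ℕ) (hd : 0 < d) (α : ℝ) (hα0 : 0 < α) (hα2 : α < 2)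
    -- the stationary ergodic group of transformations
    (τ : Rd d → Ω → Ω)
    (hτ0 : τ 0 = id)
    (hτadd : ∀ x y, τ x ∘ τ y = τ (x + y))
    (hτmeas : Measurable fun p : Rd d × Ω => τ p.1 p.2)
    (hτstat : ∀ x, MeasurePreserving (τ x) ℙ ℙ)
    (hτerg : ∀ A : Set Ω, MeasurableSet A → (∀ x, τ x ⁻¹' A = A) → ℙ A = 0 ∨ ℙ A = 1)
    -- the coefficient κ
    (κ : Rd d → Rd d → Ω → ℝ)
    (hκmeas : Measurable fun p : Rd d × Rd d × Ω => κ p.1 p.2.1 p.2.2)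
    (hκnn : ∀ x y ω, 0 ≤ κ x y ω)
    (hκsym : ∀ x y ω, κ x y ω = κ y x ω)
    (hκshift : ∀ x y z ω, κ (x + z) (y + z) ω = κ x y (τ z ω))
    -- the dominating random variable Λ₂ with 𝔼[Λ₂] < ∞
    (Λ₂ : Ω → ℝ) (hΛmeas : Measurable Λ₂) (hΛnn : ∀ ω, 0 ≤ Λ₂ ω)
    (hΛint : Integrable Λ₂ ℙ)
    (hκbound : ∀ᵐ ω ∂ℙ,
      (∀ x y : Rd d, κ x y ω ≤ Λ₂ (τ x ω) * Λ₂ (τ y ω)) ∧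
      (∀ R : ℝ, 0 < R → ∃ M, ∀ x ∈ ball (0 : Rd d) R, Λ₂ (τ x ω) ≤ M)) :
    ∀ᵐ ω ∂ℙ, ∀ R : ℝ, 1 ≤ R →
      (∫⁻ x in ball (0 : Rd d) R, ∫⁻ z : Rd d,
        ENNReal.ofReal
          (min 1 (‖z‖ ^ 2) * κ x (x + z) ω / ‖z‖ ^ ((d : ℝ) + α))) < ∞ := by
  have hfr : Module.finrank ℝ (Rd d) = d := by simp
  -- the near-diagonal weight is integrable
  have hnear : (∫⁻ z in ball (0 : Rd d) 1,
      ENNReal.ofReal (‖z‖ ^ 2 / ‖z‖ ^ ((d : ℝ) + α))) < ∞ := by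
    have hint : IntegrableOn (fun z : Rd d => ‖z‖ ^ 2 / ‖z‖ ^ ((d : ℝ) + α)) (ball 0 1) := by
      refine integrableOn_ball_of_norm_le_rpow (C := 1) (α := (d + α) - 2) (by rw [hfr]; exact hd)
        (by rw [hfr]; linarith) ?_ ?_
      · refine ae_restrict_of_ae ?_
        have : Nonempty (Fin d) := ⟨⟨0, hd⟩⟩
        filter_upwards [compl_mem_ae_iff.mpr (measure_singleton (0 : Rd d))] with z hz
        have hz0 : 0 < ‖z‖ := norm_pos_iff.mpr hz
        rw [Real.norm_of_nonneg (by positivity), neg_sub, Real.rpow_sub hz0]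
        simp
      · exact Measurable.aestronglyMeasurable (by fun_prop)
    have := hint.2
    rw [hasFiniteIntegral_iff_ofReal (Eventually.of_forall fun z => by positivity)] at this
    exact this
  -- the weighted integral is a.s. finite
  have hfar : ∀ᵐ ω ∂ℙ, (∫⁻ y : Rd d,
      ENNReal.ofReal (Λ₂ (τ y ω)) * ENNReal.ofReal ((1 + ‖y‖) ^ (-((d : ℝ) + α)))) < ∞ := by
    have hm : Measurable fun p : Ω × Rd d =>
        ENNReal.ofReal (Λ₂ (τ p.2 p.1)) * ENNReal.ofReal ((1 + ‖p.2‖) ^ (-((d : ℝ) + α))) := by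
      have h1 : Measurable fun p : Ω × Rd d => Λ₂ (τ p.2 p.1) :=
        hΛmeas.comp (hτmeas.comp measurable_swap)
      fun_prop
    refine ae_lt_top hm.lintegral_prod_right' ?_
    rw [lintegral_lintegral_swap hm.aemeasurable]
    have hE : (∫⁻ ω, ENNReal.ofReal (Λ₂ ω) ∂ℙ) < ∞ := by
      have := hΛint.2
      rwa [hasFiniteIntegral_iff_ofReal (Eventually.of_forall hΛnn)] at this
    have heq : ∀ y : Rd d, (∫⁻ ω, ENNReal.ofReal (Λ₂ (τ y ω)) *
        ENNReal.ofReal ((1 + ‖y‖) ^ (-((d : ℝ) + α))) ∂ℙ) =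
        (∫⁻ ω, ENNReal.ofReal (Λ₂ ω) ∂ℙ) *
          ENNReal.ofReal ((1 + ‖y‖) ^ (-((d : ℝ) + α))) := by
      intro y
      rw [lintegral_mul_const' _ _ ENNReal.ofReal_ne_top,
        (hτstat y).lintegral_comp hΛmeas.ennreal_ofReal]
    simp_rw [heq]
    rw [lintegral_const_mul' _ _ hE.ne]
    refine (ENNReal.mul_lt_top hE (finite_integral_one_add_norm ?_)).ne
    rw [hfr]; linarith
  filter_upwards [hκbound, hfar] with ω hω hF R hR
  obtain ⟨hκ, hloc⟩ := hω
  obtain ⟨M, hM⟩ := hloc (R + 1) (by linarith)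
  have hM0 : 0 ≤ M := (hΛnn _).trans (hM 0 (by simp; linarith))
  set N : ℝ≥0∞ := ∫⁻ z in ball (0 : Rd d) 1,
      ENNReal.ofReal (‖z‖ ^ 2 / ‖z‖ ^ ((d : ℝ) + α)) with hN
  set F : ℝ≥0∞ := ∫⁻ y : Rd d,
      ENNReal.ofReal (Λ₂ (τ y ω)) * ENNReal.ofReal ((1 + ‖y‖) ^ (-((d : ℝ) + α))) with hFdef
  set K : ℝ≥0∞ := ENNReal.ofReal (M * M) * N +
    ENNReal.ofReal (M * (R + 2) ^ ((d : ℝ) + α)) * F with hK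
  have hKtop : K < ∞ := ENNReal.add_lt_top.mpr
    ⟨ENNReal.mul_lt_top ENNReal.ofReal_lt_top hnear, ENNReal.mul_lt_top ENNReal.ofReal_lt_top hF⟩
  have hs : 0 < (d : ℝ) + α := by positivity
  have hinner : ∀ x ∈ ball (0 : Rd d) R, (∫⁻ z : Rd d, ENNReal.ofReal
      (min 1 (‖z‖ ^ 2) * κ x (x + z) ω / ‖z‖ ^ ((d : ℝ) + α))) ≤ K := by
    intro x hx
    have hxR : ‖x‖ < R := by simpa using hx
    have hΛx : Λ₂ (τ x ω) ≤ M := hM x (by simp; linarith)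
    rw [← lintegral_add_compl _ (measurableSet_ball : MeasurableSet (ball (0 : Rd d) 1)), hK]
    gcongr
    · rw [hN, ← lintegral_const_mul' _ _ ENNReal.ofReal_ne_top]
      refine setLIntegral_mono' measurableSet_ball fun z hz => ?_
      have hz1 : ‖z‖ < 1 := by simpa using hz
      rw [← ENNReal.ofReal_mul (by positivity)]
      refine ENNReal.ofReal_le_ofReal ?_
      rw [← mul_div_assoc]
      have h2 : Λ₂ (τ (x + z) ω) ≤ M :=
        hM _ (by simp only [mem_ball, dist_zero_right]; linarith [norm_add_le x z])
      have h3 : κ x (x + z) ω ≤ M * M :=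
        (hκ x (x + z)).trans (mul_le_mul hΛx h2 (hΛnn _) hM0)
      rw [mul_comm (M * M)]
      gcongr
      · exact hκnn _ _ _
      · exact min_le_right _ _
    · have htr : F = ∫⁻ z : Rd d, ENNReal.ofReal (Λ₂ (τ (x + z) ω)) *
          ENNReal.ofReal ((1 + ‖x + z‖) ^ (-((d : ℝ) + α))) :=
        (lintegral_add_left_eq_self (μ := volume) (fun y : Rd d => ENNReal.ofReal (Λ₂ (τ y ω)) *
          ENNReal.ofReal ((1 + ‖y‖) ^ (-((d : ℝ) + α)))) x).symm
      rw [htr, ← lintegral_const_mul' _ _ ENNReal.ofReal_ne_top]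
      refine le_trans (setLIntegral_mono' measurableSet_ball.compl fun z hz => ?_)
        (setLIntegral_le_lintegral _ _)
      have hz1 : 1 ≤ ‖z‖ := by simpa using hz
      have hz0 : 0 < ‖z‖ := by linarith
      rw [← ENNReal.ofReal_mul (hΛnn _), ← ENNReal.ofReal_mul (by positivity)]
      refine ENNReal.ofReal_le_ofReal ?_
      have h3 : κ x (x + z) ω ≤ M * Λ₂ (τ (x + z) ω) :=
        (hκ x (x + z)).trans (mul_le_mul_of_nonneg_right hΛx (hΛnn _))
      have h4 : 1 + ‖x + z‖ ≤ (R + 2) * ‖z‖ := by nlinarith [norm_add_le x z]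
      have h5 : (1 + ‖x + z‖) ^ ((d : ℝ) + α) ≤
          (R + 2) ^ ((d : ℝ) + α) * ‖z‖ ^ ((d : ℝ) + α) := by
        rw [← Real.mul_rpow (by linarith) hz0.le]
        exact Real.rpow_le_rpow (by positivity) h4 hs.le
      have h6 : 0 < (1 + ‖x + z‖) ^ ((d : ℝ) + α) := by positivity
      have h7 : 0 < ‖z‖ ^ ((d : ℝ) + α) := by positivity
      have h8 : 1 / ‖z‖ ^ ((d : ℝ) + α) ≤
          (R + 2) ^ ((d : ℝ) + α) * (1 + ‖x + z‖) ^ (-((d : ℝ) + α)) := by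
        rw [Real.rpow_neg (by positivity), ← div_eq_mul_inv, div_le_div_iff₀ h7 h6]
        linarith
      have h9 : min 1 (‖z‖ ^ 2) * κ x (x + z) ω ≤ M * Λ₂ (τ (x + z) ω) :=
        (mul_le_of_le_one_left (hκnn _ _ _) (min_le_left _ _)).trans h3
      calc min 1 (‖z‖ ^ 2) * κ x (x + z) ω / ‖z‖ ^ ((d : ℝ) + α)
          = min 1 (‖z‖ ^ 2) * κ x (x + z) ω * (1 / ‖z‖ ^ ((d : ℝ) + α)) := by ring
        _ ≤ M * Λ₂ (τ (x + z) ω) *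
            ((R + 2) ^ ((d : ℝ) + α) * (1 + ‖x + z‖) ^ (-((d : ℝ) + α))) :=
          mul_le_mul h9 h8 (by positivity) (mul_nonneg hM0 (hΛnn _))
        _ = _ := by ring
  calc _ ≤ ∫⁻ _ in ball (0 : Rd d) R, K := setLIntegral_mono' measurableSet_ball hinner
    _ = K * volume (ball (0 : Rd d) R) := by simp
    _ < ∞ := ENNReal.mul_lt_top hKtop measure_ball_lt_top

end
end
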